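/- If a ≠ 0, ε ≠ 0, and b is a real number that is NOT an integer multiple of π/N, then the Harper matrix h(a, b, ε) has N distinct eigenvalues; equivalently, its characteristic polynomial has N distinct roots (all eigenvalues are simple). -/

import Mathlib

open Matrix Complex

/-- The primitive `N`-th root of unity `ω = exp(2πi/N)`. -/
noncomputable def omegaN (N : ℕ) : ℂ := Complex.exp (2 * (Real.pi : ℂ) * Complex.I / (N : ℂ))

/-- The clock matrix `Z` with `Z_{jk} = ω^j` if `j = k`, `0` otherwise. -/
noncomputable def clockZ (N : ℕ) : Matrix (Fin N) (Fin N) ℂ :=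
  Matrix.diagonal fun j => omegaN N ^ (j : ℕ)

/-- The shift matrix `X` with `X_{jk} = 1` if `j = k + 1 (mod N)`, `0` otherwise. -/
def shiftX (N : ℕ) : Matrix (Fin N) (Fin N) ℂ :=
  Matrix.of fun j k => if (j : ℕ) = ((k : ℕ) + 1) % N then 1 else 0

/-- The shifted Harper matrix
`h(a,b,ε) = (a/2)·e^{ib}·X + (a/2)·e^{−ib}·Xᴴ + (ε/2)·(Z + Zᴴ)`. -/
noncomputable def harper (N : ℕ) (a b ε : ℝ) : Matrix (Fin N) (Fin N) ℂ :=
  ((a : ℂ) / 2 * Complex.exp ((b : ℂ) * Complex.I)) • shiftX N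
  + ((a : ℂ) / 2 * Complex.exp (-(b : ℂ) * Complex.I)) • (shiftX N)ᴴ
  + ((ε : ℂ) / 2) • (clockZ N + (clockZ N)ᴴ)

/-- The parity matrix `P` with `P_{jk} = 1` if `j + k ≡ 0 (mod N)`, `0` otherwise. -/
def parityP (N : ℕ) : Matrix (Fin N) (Fin N) ℂ :=
  Matrix.of fun j k => if ((j : ℕ) + (k : ℕ)) % N = 0 then 1 else 0

/-- The discrete Fourier transform matrix `Q` with `Q_{jk} = ω^{jk}/√N`. -/
noncomputable def dftQ (N : ℕ) : Matrix (Fin N) (Fin N) ℂ :=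
  Matrix.of fun j k => omegaN N ^ ((j : ℕ) * (k : ℕ)) / (Real.sqrt N : ℂ)

theorem rec_dep (N : ℕ) (c c' : ℂ) (hc' : c' ≠ 0) (hcc : c ^ N ≠ c' ^ N)
    (d u v : ℕ → ℂ)
    (hu : ∀ n, c * u n + c' * u (n + 2) = d n * u (n + 1))
    (hv : ∀ n, c * v n + c' * v (n + 2) = d n * v (n + 1))
    (pu : ∀ n, u (n + N) = u n) (pv : ∀ n, v (n + N) = v n) :
    ∃ α β : ℂ, (α ≠ 0 ∨ β ≠ 0) ∧ ∀ n, α * u n + β * v n = 0 := by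
  have hW : ∀ n, c' ^ n * (u (n + 1) * v n - u n * v (n + 1))
      = c ^ n * (u 1 * v 0 - u 0 * v 1) := by
    intro n
    induction n with
    | zero => simp
    | succ n ih =>
      rw [pow_succ c n, mul_right_comm, ← ih]
      linear_combination c' ^ n * v (n + 1) * hu n - c' ^ n * u (n + 1) * hv n
  have hW0 : u 1 * v 0 - u 0 * v 1 = 0 := by
    have h := hW N
    have e1 : u N = u 0 := by simpa using pu 0
    have e2 : v N = v 0 := by simpa using pv 0
    rw [add_comm N 1, pu, pv, e1, e2] at h
    have h2 : (c ^ N - c' ^ N) * (u 1 * v 0 - u 0 * v 1) = 0 := by linear_combination -h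
    exact (mul_eq_zero.mp h2).resolve_left (sub_ne_zero.mpr hcc)
  have key : ∀ α β : ℂ, α * u 0 + β * v 0 = 0 → α * u 1 + β * v 1 = 0 →
      ∀ n, α * u n + β * v n = 0 := by
    intro α β h0 h1 n
    have : (α * u n + β * v n = 0) ∧ (α * u (n + 1) + β * v (n + 1) = 0) := by
      induction n with
      | zero => exact ⟨h0, h1⟩
      | succ n ih =>
        refine ⟨ih.2, ?_⟩
        apply (mul_eq_zero.mp (?_ : c' * _ = 0)).resolve_left hc'
        linear_combination α * hu n + β * hv n - c * ih.1 + d n * ih.2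
    exact this.1
  by_cases h0 : v 0 ≠ 0 ∨ -u 0 ≠ 0
  · exact ⟨v 0, -u 0, h0, key _ _ (by ring) (by linear_combination hW0)⟩
  push Not at h0
  have hu0 : u 0 = 0 := by simpa using h0.2
  by_cases h1 : v 1 ≠ 0 ∨ -u 1 ≠ 0
  · exact ⟨v 1, -u 1, h1, key _ _ (by rw [h0.1, hu0]; ring) (by ring)⟩
  push Not at h1
  have hu1 : u 1 = 0 := by simpa using h1.2
  exact ⟨1, 0, by simp, key _ _ (by rw [hu0]; ring) (by rw [hu1]; ring)⟩

theorem harper_herm (N : ℕ) (a b ε : ℝ) : (harper N a b ε).IsHermitian := by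
  unfold Matrix.IsHermitian harper
  simp only [conjTranspose_add, conjTranspose_smul, conjTranspose_conjTranspose]
  have h1 : star ((a : ℂ) / 2 * Complex.exp ((b : ℂ) * Complex.I))
      = (a : ℂ) / 2 * Complex.exp (-(b : ℂ) * Complex.I) := by
    simp [← Complex.exp_conj]
  have h3 : star ((ε : ℂ) / 2) = (ε : ℂ) / 2 := by simp
  have h2 : star ((a : ℂ) / 2 * Complex.exp (-(b : ℂ) * Complex.I))
      = (a : ℂ) / 2 * Complex.exp ((b : ℂ) * Complex.I) := by rw [← h1, star_star]
  rw [h1, h2, h3, add_comm (clockZ N)ᴴ]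
  congr 1
  exact add_comm _ _

theorem shift_mulVec (N : ℕ) (hN : 0 < N) (v : Fin N → ℂ) (n : ℕ) :
    (shiftX N *ᵥ v) ⟨(n + 1) % N, Nat.mod_lt _ hN⟩ = v ⟨n % N, Nat.mod_lt _ hN⟩ := by
  simp only [mulVec, dotProduct, shiftX, of_apply]
  rw [Finset.sum_eq_single ⟨n % N, Nat.mod_lt _ hN⟩]
  · simp
  · intro k _ hk
    rw [if_neg, zero_mul]
    intro h
    apply hk
    have h' : n % N = k % N := Nat.ModEq.add_right_cancel' 1 (show n + 1 ≡ k + 1 [MOD N] from h)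
    rw [Nat.mod_eq_of_lt k.2] at h'
    exact Fin.ext h'.symm
  · simp

theorem shiftH_mulVec (N : ℕ) (hN : 0 < N) (v : Fin N → ℂ) (n : ℕ) :
    ((shiftX N)ᴴ *ᵥ v) ⟨n % N, Nat.mod_lt _ hN⟩ = v ⟨(n + 1) % N, Nat.mod_lt _ hN⟩ := by
  simp only [mulVec, dotProduct, shiftX, conjTranspose_apply, of_apply]
  rw [Finset.sum_eq_single ⟨(n + 1) % N, Nat.mod_lt _ hN⟩]
  · simp
  · intro k _ hk
    rw [if_neg, star_zero, zero_mul]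
    intro h
    apply hk
    apply Fin.ext
    simpa using h
  · simp

theorem harper_rec (N : ℕ) (hN : 0 < N) (a b ε : ℝ) (l : ℂ) :
    ∃ d : ℕ → ℂ, ∀ v : Fin N → ℂ, harper N a b ε *ᵥ v = l • v → ∀ n : ℕ,
      ((a : ℂ) / 2 * Complex.exp ((b : ℂ) * Complex.I)) * v ⟨n % N, Nat.mod_lt _ hN⟩
      + ((a : ℂ) / 2 * Complex.exp (-(b : ℂ) * Complex.I)) * v ⟨(n + 2) % N, Nat.mod_lt _ hN⟩
      = d n * v ⟨(n + 1) % N, Nat.mod_lt _ hN⟩ := by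
  refine ⟨fun n => l - (ε : ℂ) / 2 * (omegaN N ^ ((n + 1) % N) + star (omegaN N ^ ((n + 1) % N))),
    fun v hv n => ?_⟩
  have h := congrFun hv ⟨(n + 1) % N, Nat.mod_lt _ hN⟩
  simp only [harper, add_mulVec, smul_mulVec, Pi.add_apply, Pi.smul_apply, smul_eq_mul] at h
  rw [shift_mulVec N hN v n, shiftH_mulVec N hN v (n + 1)] at h
  simp only [clockZ, diagonal_conjTranspose, mulVec_diagonal, Pi.star_apply] at h
  linear_combination h

/-- If `a ≠ 0`, `ε ≠ 0`, and `b` is not an integer multiple of `π/N`, then the Harper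
matrix `h(a, b, ε)` has `N` distinct eigenvalues: its characteristic polynomial has
`N` distinct roots. -/
theorem harper_distinct_eigenvalues (N : ℕ) (hN : 2 ≤ N) (a b ε : ℝ)
    (ha : a ≠ 0) (hε : ε ≠ 0) (hb : ¬ ∃ m : ℤ, b = (m : ℝ) * Real.pi / N) :
    (Matrix.charpoly (harper N a b ε)).roots.toFinset.card = N := by
  have hN0 : 0 < N := by omega
  have hA := harper_herm N a b ε
  have haC : (a : ℂ) / 2 ≠ 0 := by simpa using ha
  have hcc : ((a : ℂ) / 2 * Complex.exp ((b : ℂ) * Complex.I)) ^ N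
      ≠ ((a : ℂ) / 2 * Complex.exp (-(b : ℂ) * Complex.I)) ^ N := by
    intro h
    rw [mul_pow, mul_pow] at h
    have h := mul_left_cancel₀ (pow_ne_zero N haC) h
    rw [← Complex.exp_nat_mul, ← Complex.exp_nat_mul, Complex.exp_eq_exp_iff_exists_int] at h
    obtain ⟨m, hm⟩ := h
    apply hb
    refine ⟨m, ?_⟩
    have hNR : (N : ℝ) ≠ 0 := by positivity
    rw [eq_div_iff hNR]
    have h2 : ((b * N : ℝ) : ℂ) * (2 * I) = ((m * Real.pi : ℝ) : ℂ) * (2 * I) := by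
      push_cast
      linear_combination hm
    exact_mod_cast mul_right_cancel₀ (by simp) h2
  have hinj : Function.Injective hA.eigenvalues := by
    intro i j hij
    by_contra hne
    obtain ⟨d, hd⟩ := harper_rec N hN0 a b ε (hA.eigenvalues i : ℂ)
    have hi := hd _ (by simpa using hA.mulVec_eigenvectorBasis i)
    have hj := hd _ (by rw [hij]; simpa using hA.mulVec_eigenvectorBasis j)
    obtain ⟨α, β, hαβ, h0⟩ := rec_dep N _ _ (mul_ne_zero haC (Complex.exp_ne_zero _)) hcc d
      (fun n => (hA.eigenvectorBasis i) ⟨n % N, Nat.mod_lt _ hN0⟩)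
      (fun n => (hA.eigenvectorBasis j) ⟨n % N, Nat.mod_lt _ hN0⟩) hi hj (by simp) (by simp)
    have hli := hA.eigenvectorBasis.orthonormal.linearIndependent
    have hpair : α • hA.eigenvectorBasis i + β • hA.eigenvectorBasis j = 0 := by
      ext k
      have := h0 k
      simpa [Nat.mod_eq_of_lt k.2] using this
    have hli2 : LinearIndependent ℂ ![hA.eigenvectorBasis i, hA.eigenvectorBasis j] := by
      have h := hli.comp ![i, j] (by
        intro x y hxy
        fin_cases x <;> fin_cases y <;> simp_all)
      have e : ⇑hA.eigenvectorBasis ∘ ![i, j]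
          = ![hA.eigenvectorBasis i, hA.eigenvectorBasis j] := by
        funext x
        fin_cases x <;> rfl
      rw [e] at h
      exact h
    have := LinearIndependent.pair_iff.mp hli2 α β hpair
    tauto
  rw [hA.roots_charpoly_eq_eigenvalues]
  rw [Multiset.toFinset_card_of_nodup]
  · simp
  · refine Multiset.Nodup.map ?_ Finset.univ.nodup
    exact fun i j h => hinj (by simpa using h)
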